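/- arXiv:1604.06078 — 2 statements merged into one kernel-verified Lean document; each statement's English description precedes it below -/
import Mathlib

section
/- Let $G_2$ be holomorphic on the annulus $\{r < |z| < 1\}$ with $0 < r \le 1/4$ and Laurent coefficients $a_n$. For any $\lambda > 1$ with $\lambda r < \lambda^{-1}$, the $L^2$ norm on the smaller annulus satisfies $\|G_2\|^2_{L^2(B_{\lambda^{-1}} \setminus B_{\lambda r})} \le C |a_{-1}|^2 |\ln r| + C \lambda^{-2} \|G_2\|^2_{L^2(B_1 \setminus B_r)}$ for a universal constant $C$. -/
open MeasureTheory Metric Set ENNReal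

/-!
On an annulus the Laurent modes `z ^ n` are orthogonal, so integrating Parseval's identity on the
circles `‖z‖ = ρ` against `ρ dρ` turns both sides into sums over `n` of `2π ‖aₙ‖²` times a radial
integral of `ρ ^ (2n + 1)`. For `n ≥ 0` the dilation by `λ⁻¹` carries `(λ²r, 1)` onto
`(λr, λ⁻¹)`, and for `n ≤ -2` the dilation by `λ` carries `(r, λ⁻²)` onto it; either way the
radial integral is `λ^{-|2n + 2|} ≤ λ⁻²` times an integral over a subset of `(r, 1)`. The mode
`n = -1` is scale invariant and contributes the logarithm instead.
-/

theorem enorm_sq_eq_tsum_of_orthonormal {𝕜 E ι : Type*} [RCLike 𝕜] [SeminormedAddCommGroup E]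
    [InnerProductSpace 𝕜 E] {v : ι → E} (hv : Orthonormal 𝕜 v) {c : ι → 𝕜} {x : E}
    (hx : HasSum (fun i ↦ c i • v i) x) : ‖x‖ₑ ^ 2 = ∑' i, ‖c i‖ₑ ^ 2 := by
  classical
  have enorm_sq_sum (s : Finset ι) : ‖∑ i ∈ s, c i • v i‖ₑ ^ 2 = ∑ i ∈ s, ‖c i‖ₑ ^ 2 := by
    have norm_sq_sum : ‖∑ i ∈ s, c i • v i‖ ^ 2 = ∑ i ∈ s, ‖c i‖ ^ 2 := by
      simpa [LinearIsometry.toSpanSingleton] using hv.orthogonalFamily.norm_sum c s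
    simp_rw [← ofReal_norm, ← ofReal_pow (norm_nonneg _), norm_sq_sum]
    exact ofReal_sum_of_nonneg fun i _ ↦ sq_nonneg _
  have tendsto_enorm_sq := ((ENNReal.continuous_pow 2).comp continuous_enorm).tendsto x |>.comp hx
  refine tendsto_nhds_unique tendsto_enorm_sq ?_
  simp only [Function.comp_def, enorm_sq_sum]
  exact ENNReal.summable.hasSum

theorem lintegral_haarAddCircle_enorm_sq {T : ℝ} [Fact (0 < T)] {c : ℤ → ℂ} {f : C(AddCircle T, ℂ)}
    (hf : HasSum (fun n ↦ c n • fourier n) f) :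
    ∫⁻ t, ‖f t‖ₑ ^ 2 ∂AddCircle.haarAddCircle = ∑' n, ‖c n‖ₑ ^ 2 := by
  let toL2 := ContinuousMap.toLp (E := ℂ) 2 (AddCircle.haarAddCircle (T := T)) ℂ
  have hL2 : HasSum (fun n ↦ c n • fourierLp 2 n) (toL2 f) := by
    simpa only [map_smul] using hf.mapL toL2
  have enorm_toL2 : ‖toL2 f‖ₑ ^ 2 = ∫⁻ t, ‖f t‖ₑ ^ 2 ∂AddCircle.haarAddCircle := by
    rw [Lp.enorm_def, eLpNorm_congr_ae (ContinuousMap.coeFn_toLp _ f)]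
    simpa using eLpNorm_nnreal_pow_eq_lintegral (f := f) (μ := AddCircle.haarAddCircle)
      (p := 2) two_ne_zero
  rw [← enorm_toL2, enorm_sq_eq_tsum_of_orthonormal orthonormal_fourier hL2]

theorem circleMap_zero_zpow_eq_fourier (ρ θ : ℝ) (n : ℤ) :
    circleMap 0 ρ θ ^ n = ρ ^ n * fourier n (θ : AddCircle (2 * Real.pi)) := by
  have : (Real.pi : ℂ) ≠ 0 := Complex.ofReal_ne_zero.2 Real.pi_ne_zero
  rw [circleMap_zero, mul_zpow, fourier_coe_apply, ← Complex.exp_int_mul]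
  push_cast
  field_simp

theorem lintegral_circleMap_enorm_sq_tsum {a : ℤ → ℂ} {ρ : ℝ}
    (ha : Summable fun n ↦ a n * (ρ : ℂ) ^ n) :
    ∫⁻ θ in Ioo (-Real.pi) Real.pi, ‖∑' n, a n * circleMap 0 ρ θ ^ n‖ₑ ^ 2 =
      ENNReal.ofReal (2 * Real.pi) * ∑' n, ‖a n * (ρ : ℂ) ^ n‖ₑ ^ 2 := by
  have : Fact (0 < 2 * Real.pi) := ⟨Real.two_pi_pos⟩
  obtain ⟨f, hf⟩ : Summable fun n ↦
      (a n * (ρ : ℂ) ^ n) • (fourier n : C(AddCircle (2 * Real.pi), ℂ)) :=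
    .of_norm (by simpa only [norm_smul, fourier_norm, mul_one] using ha.norm)
  have f_coe (θ : ℝ) : ∑' n, a n * circleMap 0 ρ θ ^ n = f θ := by
    simp_rw [circleMap_zero_zpow_eq_fourier, ← mul_assoc]
    exact (hf.mapL (ContinuousMap.evalCLM ℂ (θ : AddCircle (2 * Real.pi)))).tsum_eq
  calc ∫⁻ θ in Ioo (-Real.pi) Real.pi, ‖∑' n, a n * circleMap 0 ρ θ ^ n‖ₑ ^ 2
      = ∫⁻ θ in Ioc (-Real.pi) (-Real.pi + 2 * Real.pi),
          ‖f (θ : AddCircle (2 * Real.pi))‖ₑ ^ 2 := by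
        simp_rw [f_coe, show -Real.pi + 2 * Real.pi = Real.pi by ring]
        exact setLIntegral_congr Ioo_ae_eq_Ioc
    _ = ∫⁻ t : AddCircle (2 * Real.pi), ‖f t‖ₑ ^ 2 :=
        AddCircle.lintegral_preimage _ _ fun t ↦ ‖f t‖ₑ ^ 2
    _ = ENNReal.ofReal (2 * Real.pi) * ∑' n, ‖a n * (ρ : ℂ) ^ n‖ₑ ^ 2 := by
        rw [AddCircle.volume_eq_smul_haarAddCircle, lintegral_smul_measure, smul_eq_mul,
          lintegral_haarAddCircle_enorm_sq hf]

theorem lintegral_eq_lintegral_Ioi_circleMap {f : ℂ → ℝ≥0∞} (hf : Measurable f) :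
    ∫⁻ z, f z = ∫⁻ ρ in Ioi (0 : ℝ),
      ENNReal.ofReal ρ * ∫⁻ θ in Ioo (-Real.pi) Real.pi, f (circleMap 0 ρ θ) := by
  have symm_eq_circleMap (p : ℝ × ℝ) : Complex.polarCoord.symm p = circleMap 0 p.1 p.2 := by
    simp [circleMap_zero, Complex.exp_mul_I]
  have measurable_uncurry_circleMap : Measurable fun p : ℝ × ℝ ↦ circleMap 0 p.1 p.2 := by
    unfold circleMap
    fun_prop
  simp_rw [← Complex.lintegral_comp_polarCoord_symm, symm_eq_circleMap, smul_eq_mul]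
  rw [polarCoord_target, Measure.volume_eq_prod, setLIntegral_prod _ (by fun_prop)]
  simp_rw [lintegral_const_mul' _ _ ofReal_ne_top]

theorem setLIntegral_norm_preimage {f : ℂ → ℝ≥0∞} (hf : Measurable f) {S : Set ℝ}
    (hS : MeasurableSet S) (hS_pos : S ⊆ Ioi 0) :
    ∫⁻ z in norm ⁻¹' S, f z =
      ∫⁻ ρ in S, ENNReal.ofReal ρ * ∫⁻ θ in Ioo (-Real.pi) Real.pi, f (circleMap 0 ρ θ) := by
  have hS_preimage : MeasurableSet (norm ⁻¹' S : Set ℂ) := measurable_norm hS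
  rw [← lintegral_indicator hS_preimage,
    lintegral_eq_lintegral_Ioi_circleMap (hf.indicator hS_preimage),
    ← inter_eq_left.2 hS_pos, ← setLIntegral_indicator hS]
  refine setLIntegral_congr_fun measurableSet_Ioi fun ρ (hρ : 0 < ρ) ↦ ?_
  by_cases hρS : ρ ∈ S <;> simp [indicator, abs_of_pos hρ, hρ, hρS]

theorem setLIntegral_norm_preimage_enorm_sq_of_hasSum_zpow {G : ℂ → ℂ} {a : ℤ → ℂ} {S : Set ℝ}
    (hS : MeasurableSet S) (hS_pos : S ⊆ Ioi 0)
    (hG : ∀ z, ‖z‖ ∈ S → HasSum (fun n ↦ a n * z ^ n) (G z)) :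
    ∫⁻ z in norm ⁻¹' S, ‖G z‖ₑ ^ 2 =
      ∑' n, ENNReal.ofReal (2 * Real.pi) * ‖a n‖ₑ ^ 2 *
        ∫⁻ ρ in S, ENNReal.ofReal (ρ ^ (2 * n + 1)) := by
  have lintegral_circle : ∀ ρ ∈ S,
      ENNReal.ofReal ρ *
        ∫⁻ θ in Ioo (-Real.pi) Real.pi, ‖∑' n, a n * circleMap 0 ρ θ ^ n‖ₑ ^ 2 =
      ∑' n, ENNReal.ofReal (2 * Real.pi) * ‖a n‖ₑ ^ 2 * ENNReal.ofReal (ρ ^ (2 * n + 1)) := by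
    intro ρ hρS
    have hρ : 0 < ρ := hS_pos hρS
    have norm_ρ : ‖(ρ : ℂ)‖ = ρ := Complex.norm_of_nonneg hρ.le
    have summable_ρ := (hG ρ (norm_ρ.symm ▸ hρS)).summable
    rw [lintegral_circleMap_enorm_sq_tsum summable_ρ, ← ENNReal.tsum_mul_left,
      ← ENNReal.tsum_mul_left]
    refine tsum_congr fun n ↦ ?_
    have enorm_sq_mul :
        ENNReal.ofReal ρ * ‖(ρ : ℂ) ^ n‖ₑ ^ 2 = ENNReal.ofReal (ρ ^ (2 * n + 1)) := by
      rw [← ofReal_norm, norm_zpow, norm_ρ, ← ofReal_pow (by positivity),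
        ← ofReal_mul hρ.le, zpow_add_one₀ hρ.ne', mul_comm 2 n, zpow_mul, mul_comm ρ]
      norm_cast
    rw [enorm_mul, mul_pow, ← enorm_sq_mul]
    ring
  have eq_tsum : EqOn (fun z ↦ ‖G z‖ₑ ^ 2) (fun z ↦ ‖∑' n, a n * z ^ n‖ₑ ^ 2) (norm ⁻¹' S) :=
    fun z hz ↦ by simp only [(hG z hz).tsum_eq]
  rw [setLIntegral_congr_fun (measurable_norm hS) eq_tsum,
    setLIntegral_norm_preimage (by fun_prop) hS hS_pos,
    setLIntegral_congr_fun hS lintegral_circle, lintegral_tsum (by fun_prop)]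
  exact tsum_congr fun n ↦ lintegral_const_mul _ (by fun_prop)

theorem setLIntegral_image_mul_left_zpow {c : ℝ} (hc : 0 < c) {S : Set ℝ} (hS : MeasurableSet S)
    (k : ℤ) :
    ∫⁻ ρ in (c * ·) '' S, ENNReal.ofReal (ρ ^ k) =
      ENNReal.ofReal (c ^ (k + 1)) * ∫⁻ ρ in S, ENNReal.ofReal (ρ ^ k) := by
  rw [lintegral_image_eq_lintegral_abs_deriv_mul hS
      (fun ρ _ ↦ (hasDerivAt_const_mul c).hasDerivWithinAt) (mul_right_injective₀ hc.ne').injOn,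
    ← lintegral_const_mul _ (by fun_prop)]
  refine lintegral_congr fun ρ ↦ ?_
  rw [abs_of_pos hc, mul_zpow, ofReal_mul (by positivity), ← mul_assoc, ← ofReal_mul hc.le,
    zpow_add_one₀ hc.ne', mul_comm c]

theorem setLIntegral_Ioo_zpow_le {r l : ℝ} (hr : 0 ≤ r) (hl : 1 ≤ l) {k : ℤ} (hk : k ≤ -3 ∨ 1 ≤ k) :
    ∫⁻ ρ in Ioo (l * r) l⁻¹, ENNReal.ofReal (ρ ^ k) ≤
      ENNReal.ofReal (l⁻¹ ^ 2) * ∫⁻ ρ in Ioo r 1, ENNReal.ofReal (ρ ^ k) := by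
  have hl_pos : 0 < l := one_pos.trans_le hl
  obtain hk | hk := hk
  · have Ioo_eq_dilation : Ioo (l * r) l⁻¹ = (l * ·) '' Ioo r (l⁻¹ ^ 2) := by
      rw [image_mul_left_Ioo hl_pos, pow_two, mul_inv_cancel_left₀ hl_pos.ne']
    have zpow_le : l ^ (k + 1) ≤ l⁻¹ ^ 2 := by
      simpa [zpow_neg] using zpow_le_zpow_right₀ hl (show k + 1 ≤ -2 by omega)
    rw [Ioo_eq_dilation, setLIntegral_image_mul_left_zpow hl_pos measurableSet_Ioo]
    gcongr
    exact pow_le_one₀ (by positivity) (inv_le_one_of_one_le₀ hl)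
  · have Ioo_eq_dilation : Ioo (l * r) l⁻¹ = (l⁻¹ * ·) '' Ioo (l * (l * r)) 1 := by
      rw [image_mul_left_Ioo (inv_pos.2 hl_pos), inv_mul_cancel_left₀ hl_pos.ne', mul_one]
    have zpow_le : l⁻¹ ^ (k + 1) ≤ l⁻¹ ^ 2 := by
      exact_mod_cast zpow_le_zpow_right_of_le_one₀ (inv_pos.2 hl_pos) (inv_le_one_of_one_le₀ hl)
        (show 2 ≤ k + 1 by omega)
    rw [Ioo_eq_dilation, setLIntegral_image_mul_left_zpow (inv_pos.2 hl_pos) measurableSet_Ioo]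
    gcongr
    exact (le_mul_of_one_le_left hr hl).trans (le_mul_of_one_le_left (by positivity) hl)

theorem setLIntegral_Ioo_one_inv_le {r : ℝ} (hr : 0 < r) :
    ∫⁻ ρ in Ioo r 1, ENNReal.ofReal ρ⁻¹ ≤ ENNReal.ofReal |Real.log r| := by
  obtain hr_one | hr_one := le_total 1 r
  · simp [Ioo_eq_empty_of_le hr_one]
  have ae_inv_nonneg : 0 ≤ᵐ[volume.restrict (Ioc r 1)] fun ρ ↦ ρ⁻¹ :=
    (ae_restrict_mem measurableSet_Ioc).mono fun ρ hρ ↦ inv_nonneg.2 (hr.trans hρ.1).le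
  have integrableOn_inv : IntegrableOn (fun ρ : ℝ ↦ ρ⁻¹) (Ioc r 1) :=
    (intervalIntegrable_iff_integrableOn_Ioc_of_le hr_one).1 <|
      intervalIntegrable_inv_iff.2 <| .inr <| notMem_uIcc_of_lt hr one_pos
  rw [setLIntegral_congr Ioo_ae_eq_Ioc,
    ← ofReal_integral_eq_lintegral_ofReal integrableOn_inv ae_inv_nonneg,
    ← intervalIntegral.integral_of_le hr_one, integral_inv_of_pos hr one_pos, one_div,
    Real.log_inv]
  exact ofReal_le_ofReal (neg_le_abs _)

theorem setLIntegral_Ioo_odd_zpow_le {r l : ℝ} (hr : 0 < r) (hl : 1 ≤ l) (n : ℤ) :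
    ∫⁻ ρ in Ioo (l * r) l⁻¹, ENNReal.ofReal (ρ ^ (2 * n + 1)) ≤
      (if n = -1 then ENNReal.ofReal |Real.log r| else 0) +
        ENNReal.ofReal (l⁻¹ ^ 2) * ∫⁻ ρ in Ioo r 1, ENNReal.ofReal (ρ ^ (2 * n + 1)) := by
  split_ifs with hn
  · have Ioo_subset : Ioo (l * r) l⁻¹ ⊆ Ioo r 1 :=
      Ioo_subset_Ioo (le_mul_of_one_le_left hr.le hl) (inv_le_one_of_one_le₀ hl)
    refine le_add_right ?_
    simpa [hn] using (lintegral_mono_set Ioo_subset).trans (setLIntegral_Ioo_one_inv_le hr)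
  · rw [zero_add]
    exact setLIntegral_Ioo_zpow_le hr.le hl (by omega)

theorem stmt10_general {r lam : ℝ} {G2 : ℂ → ℂ} {a : ℤ → ℂ} (hr : 0 < r) (hlam : 1 < lam)
    (hG : ∀ z : ℂ, r < ‖z‖ → ‖z‖ < 1 → HasSum (fun n : ℤ ↦ a n * z ^ n) (G2 z)) :
    (∫⁻ z in ball (0:ℂ) lam⁻¹ \ ball (0:ℂ) (lam * r), ENNReal.ofReal (‖G2 z‖ ^ 2))
      ≤ ENNReal.ofReal (2 * Real.pi * ‖a (-1)‖ ^ 2 * |Real.log r|) +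
        ENNReal.ofReal (lam⁻¹ ^ 2) *
          ∫⁻ z in ball (0:ℂ) 1 \ closedBall (0:ℂ) r, ENNReal.ofReal (‖G2 z‖ ^ 2) := by
  have inner_annulus : ball (0:ℂ) lam⁻¹ \ ball 0 (lam * r) = norm ⁻¹' Ico (lam * r) lam⁻¹ := by
    ext z; simp [and_comm]
  have outer_annulus : ball (0:ℂ) 1 \ closedBall 0 r = norm ⁻¹' Ioo r 1 := by
    ext z; simp [and_comm]
  have Ico_subset : Ico (lam * r) lam⁻¹ ⊆ Ioo r 1 := fun ρ hρ ↦
    ⟨(lt_mul_of_one_lt_left hr hlam).trans_le hρ.1, hρ.2.trans (inv_lt_one_of_one_lt₀ hlam)⟩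
  have Ioo_subset_Ioi : Ioo r 1 ⊆ Ioi 0 := fun ρ hρ ↦ hr.trans hρ.1
  simp_rw [inner_annulus, outer_annulus, ofReal_pow (norm_nonneg _), ofReal_norm]
  rw [setLIntegral_norm_preimage_enorm_sq_of_hasSum_zpow measurableSet_Ico
      (Ico_subset.trans Ioo_subset_Ioi) fun z hz ↦ hG z (Ico_subset hz).1 (Ico_subset hz).2,
    setLIntegral_norm_preimage_enorm_sq_of_hasSum_zpow measurableSet_Ioo Ioo_subset_Ioi
      fun z hz ↦ hG z hz.1 hz.2]
  simp_rw [setLIntegral_congr Ioo_ae_eq_Ico.symm]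
  grw [ENNReal.tsum_le_tsum fun n ↦
    mul_le_mul_right (setLIntegral_Ioo_odd_zpow_le hr hlam.le n) _]
  simp_rw [mul_add, ENNReal.tsum_add, mul_ite, mul_zero, tsum_ite_eq,
    mul_left_comm _ (ENNReal.ofReal (lam⁻¹ ^ 2)), ENNReal.tsum_mul_left,
    ofReal_mul (show 0 ≤ 2 * Real.pi * ‖a (-1)‖ ^ 2 by positivity),
    ofReal_mul Real.two_pi_pos.le, ofReal_pow (norm_nonneg _), ofReal_norm, le_refl]

/-- For `G₂` holomorphic on `{r < |z| < 1}` (`0 < r ≤ 1/4`) with Laurent coefficients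
`a_n`, and any `λ > 1` with `λr < λ⁻¹`:
`‖G₂‖²_{L²(B_{λ⁻¹}\B_{λr})} ≤ C|a_{-1}|²|ln r| + Cλ⁻²‖G₂‖²_{L²(B₁\B_r)}`. -/
theorem stmt10 :
    ∃ C : ℝ, 0 < C ∧
      ∀ (r : ℝ) (G2 : ℂ → ℂ) (a : ℤ → ℂ) (lam : ℝ),
        0 < r → r ≤ 1/4 → 1 < lam → lam * r < lam⁻¹ →
        DifferentiableOn ℂ G2 (ball (0:ℂ) 1 \ closedBall (0:ℂ) r) →
        (∀ z : ℂ, r < ‖z‖ → ‖z‖ < 1 → HasSum (fun n : ℤ => a n * z ^ n) (G2 z)) →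
        (∫⁻ z in ball (0:ℂ) lam⁻¹ \ ball (0:ℂ) (lam * r), ENNReal.ofReal (‖G2 z‖ ^ 2))
          ≤ ENNReal.ofReal (C * ‖a (-1)‖ ^ 2 * |Real.log r|) +
            ENNReal.ofReal (C * lam⁻¹ ^ 2) *
              ∫⁻ z in ball (0:ℂ) 1 \ closedBall (0:ℂ) r,
                ENNReal.ofReal (‖G2 z‖ ^ 2) := by
  refine ⟨2 * Real.pi, Real.two_pi_pos, fun _ _ _ _ hr _ hlam _ _ hG ↦ ?_⟩
  grw [stmt10_general hr hlam hG, ← le_mul_of_one_le_left (b := _⁻¹ ^ 2) (sq_nonneg _)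
    (show 1 ≤ 2 * Real.pi by linarith [Real.pi_gt_three])]
end

section
/- There exists a constant $C > 0$ such that for every $f \in W^{1,1}(B_1)$, where $B_1 \subset \mathbb{R}^2$ is the unit disk, one has $f \in L^{2,1}(B_1)$ with $\|f\|_{L^{2,1}(B_1)} \le C \|f\|_{W^{1,1}(B_1)}$. -/
open MeasureTheory Metric Set ENNReal

/-- Lorentz `L^{2,1}` norm of a function on `U ⊆ ℂ`. -/
noncomputable def lorentz21 (U : Set ℂ) (f : ℂ → ℝ) : ℝ≥0∞ :=
  ∫⁻ t in Set.Ioi (0 : ℝ), (volume {z : ℂ | z ∈ U ∧ t ≤ ‖f z‖}) ^ (1/2 : ℝ)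

/-!
If a point lies on a chord of `U` of length `δ`, the fundamental theorem of calculus and averaging
bound `‖f‖` there by a multiple of the integral of `‖f‖ + ‖∇f‖` over the chord. Suppose the point
has such chords along both axes of a frame. Then `‖f(x, y)‖ ≤ g x` and `‖f(x, y)‖ ≤ h y`, where `g`
and `h` are multiples of the marginals of `‖f‖ + ‖∇f‖`. The level set `{‖f‖ ≥ t}` thus lies in the
product `{g ≥ t} × {h ≥ t}`, so the square root of its area is at most
`|{g ≥ t}| ^ (1/2) * |{h ≥ t}| ^ (1/2)`. Integrating in `t`, the Cauchy-Schwarz inequality and the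
layer cake formula give the bound `(∫ g) ^ (1/2) * (∫ h) ^ (1/2)`.

In the disk only points close to the four intersections of the circle with the axes lack long
chords along the axes, and these points do have long chords along the axes of a rotated frame.
-/

section LayerCake

variable {α β : Type*} [MeasurableSpace α] [MeasurableSpace β] {μ : Measure α} {ν : Measure β}

theorem lintegral_measure_ofReal_le_le_lintegral {g : α → ℝ≥0∞} (hg : AEMeasurable g μ) :
    ∫⁻ t in Ioi (0 : ℝ), μ {x | ENNReal.ofReal t ≤ g x} ≤ ∫⁻ x, g x ∂μ := by
  by_cases h_int : ∫⁻ x, g x ∂μ = ∞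
  · simp only [h_int, le_top]
  have hg_lt_top : ∀ᵐ x ∂μ, g x < ∞ := ae_lt_top' hg h_int
  calc ∫⁻ t in Ioi (0 : ℝ), μ {x | ENNReal.ofReal t ≤ g x}
      ≤ ∫⁻ t in Ioi (0 : ℝ), μ {x | t ≤ (g x).toReal} := by
        refine lintegral_mono fun t => measure_mono_ae ?_
        filter_upwards [hg_lt_top] with x hx htx
        exact (ENNReal.ofReal_le_iff_le_toReal hx.ne).1 htx
    _ = ∫⁻ x, ENNReal.ofReal (g x).toReal ∂μ :=
        (lintegral_eq_lintegral_meas_le μ (.of_forall fun _ => ENNReal.toReal_nonneg)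
          hg.ennreal_toReal).symm
    _ ≤ ∫⁻ x, g x ∂μ := lintegral_mono fun _ => ENNReal.ofReal_toReal_le

theorem lintegral_rpow_half_prod_le [SFinite ν] {g : α → ℝ≥0∞} {h : β → ℝ≥0∞}
    (hg : AEMeasurable g μ) (hh : AEMeasurable h ν) {S : ℝ → Set (α × β)}
    (hS : ∀ t, ∀ p ∈ S t, ENNReal.ofReal t ≤ g p.1 ∧ ENNReal.ofReal t ≤ h p.2) :
    ∫⁻ t in Ioi (0 : ℝ), (μ.prod ν (S t)) ^ (1/2 : ℝ) ≤
      (∫⁻ x, g x ∂μ) ^ (1/2 : ℝ) * (∫⁻ y, h y ∂ν) ^ (1/2 : ℝ) := by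
  set A : ℝ → ℝ≥0∞ := fun t => μ {x | ENNReal.ofReal t ≤ g x}
  set B : ℝ → ℝ≥0∞ := fun t => ν {y | ENNReal.ofReal t ≤ h y}
  have hA : Antitone A := fun _ _ hst => measure_mono fun _ => (ENNReal.ofReal_le_ofReal hst).trans
  have hB : Antitone B := fun _ _ hst => measure_mono fun _ => (ENNReal.ofReal_le_ofReal hst).trans
  have hSAB : ∀ t, μ.prod ν (S t) ≤ A t * B t := fun t =>
    (measure_mono fun p hp => mk_mem_prod (hS t p hp).1 (hS t p hp).2).trans_eq
      (Measure.prod_prod _ _)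
  calc ∫⁻ t in Ioi (0 : ℝ), (μ.prod ν (S t)) ^ (1/2 : ℝ)
      ≤ ∫⁻ t in Ioi (0 : ℝ), A t ^ (1/2 : ℝ) * B t ^ (1/2 : ℝ) := by
        refine lintegral_mono fun t => ?_
        rw [← ENNReal.mul_rpow_of_nonneg _ _ (by norm_num)]
        exact ENNReal.rpow_le_rpow (hSAB t) (by norm_num)
    _ ≤ (∫⁻ t in Ioi (0 : ℝ), A t) ^ (1/2 : ℝ) * (∫⁻ t in Ioi (0 : ℝ), B t) ^ (1/2 : ℝ) :=
        ENNReal.lintegral_mul_norm_pow_le hA.measurable.aemeasurable hB.measurable.aemeasurable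
          (by norm_num) (by norm_num) (by norm_num)
    _ ≤ (∫⁻ x, g x ∂μ) ^ (1/2 : ℝ) * (∫⁻ y, h y ∂ν) ^ (1/2 : ℝ) := by
        gcongr
        · exact lintegral_measure_ofReal_le_le_lintegral hg
        · exact lintegral_measure_ofReal_le_le_lintegral hh

end LayerCake

section Interval

variable {F : Type*} [NormedAddCommGroup F] [NormedSpace ℝ F] [CompleteSpace F]
  {s : Set ℝ} {u u' : ℝ → F}

theorem enorm_sub_le_lintegral_enorm_of_hasDerivAt (hs : s.OrdConnected)
    (hu : ∀ x ∈ s, HasDerivAt u (u' x) x) {x y : ℝ} (hx : x ∈ s) (hy : y ∈ s) :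
    ‖u x - u y‖ₑ ≤ ∫⁻ r in s, ‖u' r‖ₑ := by
  by_cases h_fin : ∫⁻ r in s, ‖u' r‖ₑ = ∞
  · simp only [h_fin, le_top]
  have h_int : IntegrableOn u' s := by
    refine ⟨(aestronglyMeasurable_deriv u _).congr ?_, lt_top_iff_ne_top.2 h_fin⟩
    filter_upwards [ae_restrict_mem hs.measurableSet] with r hr using (hu r hr).deriv
  have h_sub : uIcc y x ⊆ s := hs.uIcc_subset hy hx
  have h_ftc : ∫ r in y..x, u' r = u x - u y :=
    intervalIntegral.integral_eq_sub_of_hasDerivAt (fun r hr => hu r (h_sub hr))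
      (h_int.mono_set h_sub).intervalIntegrable
  calc ‖u x - u y‖ₑ = ‖∫ r in uIoc y x, u' r‖ₑ := by
        rw [← h_ftc, ← ofReal_norm, intervalIntegral.norm_intervalIntegral_eq, ofReal_norm]
    _ ≤ ∫⁻ r in uIoc y x, ‖u' r‖ₑ := enorm_integral_le_lintegral_enorm _
    _ ≤ ∫⁻ r in s, ‖u' r‖ₑ := lintegral_mono_set (uIoc_subset_uIcc.trans h_sub)

theorem volume_mul_enorm_le_of_hasDerivAt (hs : s.OrdConnected)
    (hu : ∀ x ∈ s, HasDerivAt u (u' x) x) {x : ℝ} (hx : x ∈ s) :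
    volume s * ‖u x‖ₑ ≤ (∫⁻ r in s, ‖u r‖ₑ) + volume s * ∫⁻ r in s, ‖u' r‖ₑ := by
  have hu_cont : ContinuousOn u s := fun r hr => (hu r hr).continuousAt.continuousWithinAt
  have h_pointwise : ∀ r ∈ s, ‖u x‖ₑ ≤ ‖u r‖ₑ + ∫⁻ r in s, ‖u' r‖ₑ := fun r hr => by
    calc ‖u x‖ₑ = ‖u r + (u x - u r)‖ₑ := by rw [add_sub_cancel]
      _ ≤ ‖u r‖ₑ + ‖u x - u r‖ₑ := enorm_add_le _ _
      _ ≤ _ := by gcongr; exact enorm_sub_le_lintegral_enorm_of_hasDerivAt hs hu hx hr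
  calc volume s * ‖u x‖ₑ = ∫⁻ _ in s, ‖u x‖ₑ := by rw [setLIntegral_const, mul_comm]
    _ ≤ ∫⁻ r in s, (‖u r‖ₑ + ∫⁻ r in s, ‖u' r‖ₑ) := setLIntegral_mono' hs.measurableSet h_pointwise
    _ = _ := by
        rw [lintegral_add_left' (hu_cont.aestronglyMeasurable hs.measurableSet).enorm,
          setLIntegral_const, mul_comm (volume s)]

end Interval

section Chord

variable {E F : Type*} [NormedAddCommGroup E] [NormedSpace ℝ E]
  [NormedAddCommGroup F] [NormedSpace ℝ F] {U : Set E} {f : E → F}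

/-- The point `z` lies on a segment `{z + s • v | a ≤ s ≤ a + δ}` contained in `U`. The length `δ`
is measured in multiples of `v`, and `z` may be an endpoint. -/
def HasChord (U : Set E) (δ : ℝ) (v z : E) : Prop :=
  ∃ a : ℝ, 0 ∈ Icc a (a + δ) ∧ ∀ s ∈ Icc a (a + δ), z + s • v ∈ U

/-- The density `‖f‖ + ‖∇f‖` of the `W^{1,1}(U)` norm, extended by zero outside `U`. -/
noncomputable def sobolevDensity (U : Set E) (f : E → F) : E → ℝ≥0∞ :=
  U.indicator fun z => ‖f z‖ₑ + ‖fderiv ℝ f z‖ₑ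

theorem lintegral_sobolevDensity [MeasurableSpace E] [BorelSpace E]
    [SecondCountableTopologyEither E F] {μ : Measure E} (hU : IsOpen U) {f' : E → E →L[ℝ] F}
    (hf : ∀ z ∈ U, HasFDerivAt f (f' z) z) :
    ∫⁻ z, sobolevDensity U f z ∂μ = (∫⁻ z in U, ‖f z‖ₑ ∂μ) + ∫⁻ z in U, ‖f' z‖ₑ ∂μ := by
  have hf_cont : ContinuousOn f U := fun z hz => (hf z hz).continuousAt.continuousWithinAt
  rw [← lintegral_add_left' (hf_cont.aestronglyMeasurable hU.measurableSet).enorm,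
    sobolevDensity, lintegral_indicator hU.measurableSet]
  exact setLIntegral_congr_fun hU.measurableSet fun z hz => by simp only [(hf z hz).fderiv]

variable [CompleteSpace F]

theorem measurable_sobolevDensity [MeasurableSpace E] [BorelSpace E] (hU : IsOpen U)
    (hf : ContinuousOn f U) : Measurable (sobolevDensity U f) := by
  classical
  have hf_meas : Measurable (U.indicator fun z => ‖f z‖ₑ) := by
    rw [← piecewise_eq_indicator]
    exact hf.enorm.measurable_piecewise continuousOn_const hU.measurableSet
  have h_fderiv_meas : Measurable (U.indicator fun z => ‖fderiv ℝ f z‖ₑ) :=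
    (continuous_enorm.measurable.comp (measurable_fderiv ℝ f)).indicator hU.measurableSet
  rw [sobolevDensity, indicator_add]
  exact hf_meas.add h_fderiv_meas

theorem HasChord.enorm_le_lintegral_sobolevDensity {δ : ℝ} {v z : E} (hz : HasChord U δ v z)
    (hδ : 0 < δ) (hf : ∀ z ∈ U, DifferentiableAt ℝ f z) :
    ‖f z‖ₑ ≤ ((ENNReal.ofReal δ)⁻¹ + ‖v‖ₑ) * ∫⁻ s : ℝ, sobolevDensity U f (z + s • v) := by
  obtain ⟨a, h_zero, h_chord⟩ := hz
  set I := Icc a (a + δ)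
  set J := ∫⁻ s : ℝ, sobolevDensity U f (z + s • v)
  have hδ_ne : ENNReal.ofReal δ ≠ 0 := (ENNReal.ofReal_pos.2 hδ).ne'
  have h_deriv : ∀ s ∈ I, HasDerivAt (fun s : ℝ => f (z + s • v)) (fderiv ℝ f (z + s • v) v) s :=
    fun s hs => (hf _ (h_chord s hs)).hasFDerivAt.comp_hasDerivAt s <| by
      simpa only [one_smul, id] using ((hasDerivAt_id s).smul_const v).const_add z
  have h_density : ∀ s ∈ I,
      ‖f (z + s • v)‖ₑ + ‖fderiv ℝ f (z + s • v)‖ₑ = sobolevDensity U f (z + s • v) :=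
    fun s hs => by rw [sobolevDensity, indicator_of_mem (h_chord s hs)]
  have h_value : ∫⁻ s in I, ‖f (z + s • v)‖ₑ ≤ J :=
    (setLIntegral_mono' measurableSet_Icc fun s hs =>
      le_self_add.trans_eq (h_density s hs)).trans (setLIntegral_le_lintegral _ _)
  have h_gradient : ∫⁻ s in I, ‖fderiv ℝ f (z + s • v) v‖ₑ ≤ ‖v‖ₑ * J := by
    rw [← lintegral_const_mul' _ _ enorm_ne_top]
    refine (setLIntegral_mono' measurableSet_Icc fun s hs => ?_).trans
      (setLIntegral_le_lintegral _ _)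
    rw [mul_comm]
    refine (ContinuousLinearMap.le_opENorm _ v).trans ?_
    gcongr
    exact le_add_self.trans_eq (h_density s hs)
  have h_avg := volume_mul_enorm_le_of_hasDerivAt ordConnected_Icc h_deriv h_zero
  rw [Real.volume_Icc, add_sub_cancel_left, zero_smul, add_zero] at h_avg
  rw [← ENNReal.mul_le_mul_iff_right hδ_ne ENNReal.ofReal_ne_top]
  calc ENNReal.ofReal δ * ‖f z‖ₑ ≤ J + ENNReal.ofReal δ * (‖v‖ₑ * J) :=
        h_avg.trans (by gcongr)
    _ = (ENNReal.ofReal δ * (ENNReal.ofReal δ)⁻¹) * J + ENNReal.ofReal δ * (‖v‖ₑ * J) := by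
        rw [ENNReal.mul_inv_cancel hδ_ne ENNReal.ofReal_ne_top, one_mul]
    _ = ENNReal.ofReal δ * (((ENNReal.ofReal δ)⁻¹ + ‖v‖ₑ) * J) := by ring

end Chord

/-- The points of `U` through which both lines of the coordinate frame `Φ` have a chord of length
`δ` in `U`. -/
def crossSet (U : Set ℂ) (δ : ℝ) (Φ : (ℝ × ℝ) ≃L[ℝ] ℂ) : Set ℂ :=
  {z | HasChord U δ (Φ (1, 0)) z ∧ HasChord U δ (Φ (0, 1)) z}

/-- Finitely many area-preserving linear frames suffice to draw, through every point of `U`, a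
cross of some fixed size inside `U`. This is the regularity of `U` behind the embedding. Frames may
be oblique, so a uniform cone condition implies it; area is normalized by rescaling the axes. -/
def HasUniformCrosses (U : Set ℂ) : Prop :=
  ∃ δ > 0, ∃ 𝓕 : Finset ((ℝ × ℝ) ≃L[ℝ] ℂ),
    (∀ Φ ∈ 𝓕, MeasurePreserving Φ) ∧ U ⊆ ⋃ Φ ∈ 𝓕, crossSet U δ Φ

section Lorentz

theorem lorentz21_le_sum_of_subset_biUnion {ι : Type*} {s : Finset ι} {U : Set ℂ} {A : ι → Set ℂ}
    (hU : U ⊆ ⋃ i ∈ s, A i) (f : ℂ → ℝ) : lorentz21 U f ≤ ∑ i ∈ s, lorentz21 (A i) f := by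
  have h_level : ∀ t : ℝ,
      volume {z | z ∈ U ∧ t ≤ ‖f z‖} ≤ ∑ i ∈ s, volume {z | z ∈ A i ∧ t ≤ ‖f z‖} := fun t => by
    refine (measure_mono ?_).trans (measure_biUnion_finset_le s _)
    rintro z ⟨hzU, hzt⟩
    obtain ⟨i, hi, hzi⟩ := mem_iUnion₂.1 (hU hzU)
    exact mem_iUnion₂.2 ⟨i, hi, hzi, hzt⟩
  have h_meas : ∀ i, Measurable fun t : ℝ =>
      volume {z | z ∈ A i ∧ t ≤ ‖f z‖} ^ (1/2 : ℝ) := fun i =>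
    Antitone.measurable fun _ _ hst => ENNReal.rpow_le_rpow
      (measure_mono fun _ hz => ⟨hz.1, hst.trans hz.2⟩) (by norm_num)
  simp only [lorentz21]
  rw [← lintegral_finsetSum s fun i _ => h_meas i]
  refine lintegral_mono fun t =>
    (ENNReal.rpow_le_rpow (h_level t) (by norm_num)).trans ?_
  exact s.le_sum_of_subadditive (fun x : ℝ≥0∞ => x ^ (1/2 : ℝ)) (by norm_num)
    (fun _ _ => ENNReal.rpow_add_le_add_rpow _ _ (by norm_num) (by norm_num)) _

variable {F : Type*} [NormedAddCommGroup F] [NormedSpace ℝ F] [CompleteSpace F]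
  {U : Set ℂ} {f : ℂ → F} {δ : ℝ} {Φ : (ℝ × ℝ) ≃L[ℝ] ℂ}

theorem enorm_le_of_mem_crossSet (hδ : 0 < δ) (hf : ∀ z ∈ U, DifferentiableAt ℝ f z) {p : ℝ × ℝ}
    (hp : Φ p ∈ crossSet U δ Φ) :
    ‖f (Φ p)‖ₑ ≤ ((ENNReal.ofReal δ)⁻¹ + ‖(Φ : ℝ × ℝ →L[ℝ] ℂ)‖ₑ) *
        ∫⁻ y, sobolevDensity U f (Φ (p.1, y)) ∧
      ‖f (Φ p)‖ₑ ≤ ((ENNReal.ofReal δ)⁻¹ + ‖(Φ : ℝ × ℝ →L[ℝ] ℂ)‖ₑ) *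
        ∫⁻ x, sobolevDensity U f (Φ (x, p.2)) := by
  have h_norm : ∀ q : ℝ × ℝ, ‖q‖ₑ = 1 → ‖Φ q‖ₑ ≤ ‖(Φ : ℝ × ℝ →L[ℝ] ℂ)‖ₑ := fun q hq => by
    simpa only [hq, mul_one] using! (Φ : ℝ × ℝ →L[ℝ] ℂ).le_opENorm q
  have h_line : ∀ (q : ℝ × ℝ) (s : ℝ), Φ p + s • Φ q = Φ (p.1 + s * q.1, p.2 + s * q.2) :=
    fun q s => by rw [← map_smul, ← map_add]; rfl
  constructor
  · refine (hp.2.enorm_le_lintegral_sobolevDensity hδ hf).trans ?_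
    simp only [h_line, mul_zero, add_zero, mul_one]
    rw [lintegral_add_left_eq_self fun y => sobolevDensity U f (Φ (p.1, y))]
    gcongr
    exact h_norm _ (by simp [enorm_eq_nnnorm, Prod.nnnorm_def])
  · refine (hp.1.enorm_le_lintegral_sobolevDensity hδ hf).trans ?_
    simp only [h_line, mul_zero, add_zero, mul_one]
    rw [lintegral_add_left_eq_self fun x => sobolevDensity U f (Φ (x, p.2))]
    gcongr
    exact h_norm _ (by simp [enorm_eq_nnnorm, Prod.nnnorm_def])

theorem lorentz21_crossSet_le (hU : IsOpen U) (hδ : 0 < δ) (hΦ : MeasurePreserving Φ)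
    (hf : ∀ z ∈ U, DifferentiableAt ℝ f z) :
    lorentz21 (crossSet U δ Φ) (fun z => ‖f z‖) ≤
      ((ENNReal.ofReal δ)⁻¹ + ‖(Φ : ℝ × ℝ →L[ℝ] ℂ)‖ₑ) * ∫⁻ z, sobolevDensity U f z := by
  set c := (ENNReal.ofReal δ)⁻¹ + ‖(Φ : ℝ × ℝ →L[ℝ] ℂ)‖ₑ
  set D : ℝ × ℝ → ℝ≥0∞ := fun p => sobolevDensity U f (Φ p)
  have h_density_meas : Measurable (sobolevDensity U f) := measurable_sobolevDensity hU
    fun z hz => (hf z hz).continuousAt.continuousWithinAt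
  have hD : Measurable D := h_density_meas.comp Φ.continuous.measurable
  have hD_int : ∫⁻ p, D p = ∫⁻ z, sobolevDensity U f z := hΦ.lintegral_comp h_density_meas
  have hD_fst : Measurable fun x => ∫⁻ y, D (x, y) := hD.lintegral_prod_right'
  have hD_snd : Measurable fun y => ∫⁻ x, D (x, y) := hD.lintegral_prod_left'
  have h_level : ∀ t : ℝ, ∀ p ∈ Φ ⁻¹' {z | z ∈ crossSet U δ Φ ∧ t ≤ ‖‖f z‖‖},
      ENNReal.ofReal t ≤ c * ∫⁻ y, D (p.1, y) ∧ ENNReal.ofReal t ≤ c * ∫⁻ x, D (x, p.2) := by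
    rintro t p ⟨hp, htp⟩
    have ht : ENNReal.ofReal t ≤ ‖f (Φ p)‖ₑ := by
      rw [← ofReal_norm]
      exact ENNReal.ofReal_le_ofReal (htp.trans_eq (norm_norm _))
    exact (enorm_le_of_mem_crossSet hδ hf hp).imp ht.trans ht.trans
  calc lorentz21 (crossSet U δ Φ) (fun z => ‖f z‖)
      = ∫⁻ t in Ioi (0 : ℝ), ((volume : Measure ℝ).prod volume
          (Φ ⁻¹' {z | z ∈ crossSet U δ Φ ∧ t ≤ ‖‖f z‖‖})) ^ (1/2 : ℝ) := by
        simp only [lorentz21, ← Measure.volume_eq_prod,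
          hΦ.measure_preimage_emb Φ.toHomeomorph.measurableEmbedding]
    _ ≤ (∫⁻ x, c * ∫⁻ y, D (x, y)) ^ (1/2 : ℝ) * (∫⁻ y, c * ∫⁻ x, D (x, y)) ^ (1/2 : ℝ) :=
        lintegral_rpow_half_prod_le (hD_fst.const_mul c).aemeasurable
          (hD_snd.const_mul c).aemeasurable h_level
    _ = (c * ∫⁻ z, sobolevDensity U f z) ^ (1/2 : ℝ) *
          (c * ∫⁻ z, sobolevDensity U f z) ^ (1/2 : ℝ) := by
        rw [lintegral_const_mul c hD_fst, lintegral_const_mul c hD_snd, ← hD_int,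
          Measure.volume_eq_prod, ← lintegral_prod _ hD.aemeasurable,
          ← lintegral_prod_symm _ hD.aemeasurable]
    _ = c * ∫⁻ z, sobolevDensity U f z := by
        rw [← ENNReal.rpow_add_of_nonneg _ _ (by norm_num) (by norm_num), add_halves,
          ENNReal.rpow_one]

end Lorentz

section Ball

variable {E : Type*} [NormedAddCommGroup E] [InnerProductSpace ℝ E] {δ r : ℝ} {v z : E}

theorem hasChord_ball_of_norm_add_lt (hδ : 0 ≤ δ) (hz : ‖z‖ + δ * ‖v‖ < r) :
    HasChord (ball 0 r) δ v z := by
  refine ⟨0, ⟨le_rfl, by simpa using hδ⟩, fun s hs => ?_⟩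
  rw [zero_add] at hs
  rw [mem_ball_zero_iff]
  calc ‖z + s • v‖ ≤ ‖z‖ + ‖s • v‖ := norm_add_le _ _
    _ = ‖z‖ + s * ‖v‖ := by rw [norm_smul, Real.norm_of_nonneg hs.1]
    _ ≤ ‖z‖ + δ * ‖v‖ := by gcongr; exact hs.2
    _ < r := hz

theorem hasChord_ball_of_le_abs_inner (hδ : 0 ≤ δ) (hz : z ∈ ball 0 r)
    (hv : δ * ‖v‖ ^ 2 ≤ 2 * |inner ℝ z v|) : HasChord (ball 0 r) δ v z := by
  have h_sq : ∀ s : ℝ, s * (s * ‖v‖ ^ 2 + 2 * inner ℝ z v) ≤ 0 → z + s • v ∈ ball 0 r := by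
    intro s hs
    rw [mem_ball_zero_iff] at hz ⊢
    refine lt_of_le_of_lt (le_of_sq_le_sq ?_ (norm_nonneg z)) hz
    rw [norm_add_sq_real, norm_smul, mul_pow, Real.norm_eq_abs, sq_abs, inner_smul_right]
    linarith
  rcases le_total 0 (inner ℝ z v) with h_inner | h_inner
  · rw [abs_of_nonneg h_inner] at hv
    refine ⟨-δ, by simpa using hδ, fun s hs => h_sq s ?_⟩
    rw [neg_add_cancel] at hs
    exact mul_nonpos_of_nonpos_of_nonneg hs.2 (by nlinarith [hs.1, sq_nonneg ‖v‖])
  · rw [abs_of_nonpos h_inner] at hv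
    refine ⟨0, by simpa using hδ, fun s hs => h_sq s ?_⟩
    rw [zero_add] at hs
    exact mul_nonpos_of_nonneg_of_nonpos hs.1 (by nlinarith [hs.2, sq_nonneg ‖v‖])

/-- Cartesian coordinates along the orthonormal frame `a, a * I`. -/
noncomputable def rotatedFrame (a : Circle) : (ℝ × ℝ) ≃L[ℝ] ℂ :=
  Complex.equivRealProdCLM.symm.trans (rotation a).toContinuousLinearEquiv

theorem rotatedFrame_apply (a : Circle) (p : ℝ × ℝ) :
    rotatedFrame a p = a * (p.1 + p.2 * Complex.I) := by
  simp [rotatedFrame, Complex.equivRealProdCLM_symm_apply]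

theorem measurePreserving_rotatedFrame (a : Circle) : MeasurePreserving (rotatedFrame a) :=
  (rotation a).measurePreserving.comp
    (Complex.volume_preserving_equiv_real_prod.symm Complex.measurableEquivRealProd)

theorem mem_crossSet_ball_rotatedFrame_of_norm_add_lt (a : Circle) {z : ℂ} (hδ : 0 ≤ δ)
    (hz : ‖z‖ + δ < r) : z ∈ crossSet (ball 0 r) δ (rotatedFrame a) := by
  constructor <;>
    exact hasChord_ball_of_norm_add_lt hδ (by simpa [rotatedFrame_apply, Circle.norm_coe] using hz)

theorem mem_crossSet_ball_rotatedFrame (a : Circle) {z : ℂ} (hδ : 0 ≤ δ) (hz : z ∈ ball 0 r)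
    (h_re : δ ≤ 2 * |(rotation a⁻¹ z).re|) (h_im : δ ≤ 2 * |(rotation a⁻¹ z).im|) :
    z ∈ crossSet (ball 0 r) δ (rotatedFrame a) := by
  rw [rotation_apply, Circle.coe_inv_eq_conj] at h_re h_im
  constructor <;> refine hasChord_ball_of_le_abs_inner hδ hz ?_
  · simpa [rotatedFrame_apply, Complex.inner, Circle.norm_coe, mul_comm] using h_re
  · have h_inner : inner ℝ z (a * Complex.I) = (star (a : ℂ) * z).im := by
      simp only [Complex.inner, Complex.mul_re, Complex.I_re, mul_zero, Complex.I_im, mul_one,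
        zero_sub, Complex.conj_re, neg_mul, Complex.mul_im, add_zero, Complex.conj_im, mul_neg,
        sub_neg_eq_add, RCLike.star_def]
      ring
    simpa [rotatedFrame_apply, h_inner, Circle.norm_coe] using h_im

/-- The rotation by the acute angle of the `3-4-5` triangle, whose cosine is `3/5`. -/
noncomputable def pythagoreanRotation : Circle :=
  ⟨⟨3 / 5, 4 / 5⟩, by
    simp only [Submonoid.unitSphere, Submonoid.mem_mk, Subsemigroup.mem_mk, mem_sphere_iff_norm,
      sub_zero, Complex.norm_def, Complex.normSq_mk, Real.sqrt_eq_one]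
    norm_num⟩

theorem le_abs_rotated_of_abs_lt {x y : ℝ} (hx : |x| < r / 8)
    (hxy : (3 / 4 * r) ^ 2 ≤ x ^ 2 + y ^ 2) :
    5 / 8 * r ≤ |3 * x + 4 * y| ∧ 5 / 8 * r ≤ |3 * y - 4 * x| := by
  have hy : 7 / 10 * r ≤ |y| := by
    have hx_sq : x ^ 2 ≤ (r / 8) ^ 2 := sq_le_sq.2 (hx.le.trans (le_abs_self _))
    refine le_of_sq_le_sq ?_ (abs_nonneg y)
    rw [sq_abs]
    nlinarith [sq_nonneg r]
  obtain ⟨hx_lower, hx_upper⟩ := abs_lt.1 hx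
  rcases le_abs'.1 hy with hy | hy
  · exact ⟨le_abs'.2 (.inl (by linarith)), le_abs'.2 (.inl (by linarith))⟩
  · exact ⟨le_abs'.2 (.inr (by linarith)), le_abs'.2 (.inr (by linarith))⟩

theorem le_abs_rotation_pythagoreanRotation_inv {z : ℂ} (hz : 3 / 4 * r ≤ ‖z‖)
    (h_axis : |z.re| < r / 8 ∨ |z.im| < r / 8) :
    r / 4 ≤ 2 * |(rotation pythagoreanRotation⁻¹ z).re| ∧
      r / 4 ≤ 2 * |(rotation pythagoreanRotation⁻¹ z).im| := by
  have hr : 0 ≤ r := by rcases h_axis with h | h <;> linarith [(abs_nonneg _).trans_lt h]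
  have h_norm_sq : (3 / 4 * r) ^ 2 ≤ z.re ^ 2 + z.im ^ 2 := by
    rw [← Complex.sq_norm_sub_sq_re, add_sub_cancel]
    gcongr
  have h_re : (rotation pythagoreanRotation⁻¹ z).re = (3 * z.re + 4 * z.im) / 5 := by
    rw [rotation_apply, Circle.coe_inv_eq_conj]
    simp only [pythagoreanRotation, Complex.mul_re, Complex.conj_re, Complex.conj_im, neg_mul,
      sub_neg_eq_add]
    ring
  have h_im : (rotation pythagoreanRotation⁻¹ z).im = (3 * z.im - 4 * z.re) / 5 := by
    rw [rotation_apply, Circle.coe_inv_eq_conj]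
    simp only [pythagoreanRotation, Complex.mul_im, Complex.conj_re, Complex.conj_im, neg_mul]
    ring
  have h_far : 5 / 8 * r ≤ |3 * z.re + 4 * z.im| ∧ 5 / 8 * r ≤ |3 * z.im - 4 * z.re| := by
    rcases h_axis with h_re_small | h_im_small
    · exact le_abs_rotated_of_abs_lt h_re_small h_norm_sq
    · have h := le_abs_rotated_of_abs_lt (x := -z.im) (y := z.re) (by rwa [abs_neg])
        (by rwa [neg_sq, add_comm])
      rw [abs_sub_comm]
      rwa [and_comm, mul_neg, sub_neg_eq_add, mul_neg, neg_add_eq_sub] at h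
  rw [h_re, h_im, abs_div, abs_div, abs_of_pos (by norm_num : (0 : ℝ) < 5)]
  constructor <;> linarith

theorem hasUniformCrosses_ball (hr : 0 < r) : HasUniformCrosses (ball 0 r) := by
  classical
  refine ⟨r / 4, by positivity, {rotatedFrame 1, rotatedFrame pythagoreanRotation}, ?_,
    fun z hz => ?_⟩
  · simp only [Finset.mem_insert, Finset.mem_singleton, forall_eq_or_imp, forall_eq,
      measurePreserving_rotatedFrame, and_self]
  have hδ : 0 ≤ r / 4 := by positivity
  simp only [Finset.mem_insert, Finset.mem_singleton, iUnion_iUnion_eq_or_left,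
    iUnion_iUnion_eq_left]
  by_cases h_norm : ‖z‖ < 3 / 4 * r
  · left
    exact mem_crossSet_ball_rotatedFrame_of_norm_add_lt 1 hδ (by linarith)
  by_cases h_axes : r / 8 ≤ |z.re| ∧ r / 8 ≤ |z.im|
  · left
    refine mem_crossSet_ball_rotatedFrame 1 hδ hz ?_ ?_ <;>
      simp only [inv_one, map_one, LinearIsometryEquiv.coe_one, id_eq] <;> linarith
  · right
    obtain ⟨h_re, h_im⟩ := le_abs_rotation_pythagoreanRotation_inv (not_lt.1 h_norm)
      (by simpa only [not_and_or, not_le] using h_axes)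
    exact mem_crossSet_ball_rotatedFrame _ hδ hz h_re h_im

end Ball

theorem stmt13_general {F : Type*} [NormedAddCommGroup F] [NormedSpace ℝ F] [CompleteSpace F]
    {U : Set ℂ} (hU : IsOpen U) (h_crosses : HasUniformCrosses U) :
    ∃ C : ℝ, 0 < C ∧ ∀ (f : ℂ → F) (f' : ℂ → ℂ →L[ℝ] F), (∀ z ∈ U, HasFDerivAt f (f' z) z) →
      lorentz21 U (fun z => ‖f z‖) ≤
        ENNReal.ofReal C * ((∫⁻ z in U, ‖f z‖ₑ) + ∫⁻ z in U, ‖f' z‖ₑ) := by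
  obtain ⟨δ, hδ, 𝓕, h𝓕, h_cover⟩ := h_crosses
  set c : ((ℝ × ℝ) ≃L[ℝ] ℂ) → ℝ≥0∞ := fun Φ =>
    (ENNReal.ofReal δ)⁻¹ + ‖(Φ : ℝ × ℝ →L[ℝ] ℂ)‖ₑ
  have hc : ∑ Φ ∈ 𝓕, c Φ ≠ ∞ := ENNReal.sum_ne_top.2 fun Φ _ => ENNReal.add_ne_top.2
    ⟨ENNReal.inv_ne_top.2 (ENNReal.ofReal_pos.2 hδ).ne', enorm_ne_top⟩
  refine ⟨(∑ Φ ∈ 𝓕, c Φ).toReal + 1, by positivity, fun f f' hf => ?_⟩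
  rw [← lintegral_sobolevDensity hU hf]
  calc lorentz21 U (fun z => ‖f z‖)
      ≤ ∑ Φ ∈ 𝓕, lorentz21 (crossSet U δ Φ) (fun z => ‖f z‖) :=
        lorentz21_le_sum_of_subset_biUnion h_cover _
    _ ≤ ∑ Φ ∈ 𝓕, c Φ * ∫⁻ z, sobolevDensity U f z :=
        Finset.sum_le_sum fun Φ hΦ => lorentz21_crossSet_le hU hδ (h𝓕 Φ hΦ)
          fun z hz => (hf z hz).differentiableAt
    _ = (∑ Φ ∈ 𝓕, c Φ) * ∫⁻ z, sobolevDensity U f z := (Finset.sum_mul _ _ _).symm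
    _ ≤ ENNReal.ofReal ((∑ Φ ∈ 𝓕, c Φ).toReal + 1) * ∫⁻ z, sobolevDensity U f z := by
        gcongr
        exact (ENNReal.le_ofReal_iff_toReal_le hc (by positivity)).2 (by linarith)

/-- The embedding `W^{1,1}(B₁) ⊆ L^{2,1}(B₁)` in dimension two:
`‖f‖_{L^{2,1}(B₁)} ≤ C(‖f‖_{L¹(B₁)} + ‖∇f‖_{L¹(B₁)}) = C‖f‖_{W^{1,1}(B₁)}`. -/
theorem stmt13 :
    ∃ C : ℝ, 0 < C ∧
      ∀ (f : ℂ → ℝ) (f' : ℂ → ℂ →L[ℝ] ℝ),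
        (∀ x ∈ ball (0:ℂ) 1, HasFDerivAt f (f' x) x) →
        IntegrableOn f (ball (0:ℂ) 1) volume →
        IntegrableOn (fun x => ‖f' x‖) (ball (0:ℂ) 1) volume →
        lorentz21 (ball (0:ℂ) 1) f
          ≤ ENNReal.ofReal C *
            ((∫⁻ x in ball (0:ℂ) 1, ENNReal.ofReal |f x|) +
              ∫⁻ x in ball (0:ℂ) 1, ENNReal.ofReal ‖f' x‖) := by
  obtain ⟨C, hC, h⟩ := stmt13_general (F := ℝ) isOpen_ball (hasUniformCrosses_ball one_pos)
  exact ⟨C, hC, fun f f' hf _ _ => by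
    simpa only [lorentz21, ← ofReal_norm, Real.norm_eq_abs, abs_abs] using h f f' hf⟩
end
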